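/- Let κ be a regular uncountable cardinal which is κ-compact, i.e., has the κ-filter extension property, and let ρ < κ be a cardinal. Then RC(ρ, <κ, κ⁺) holds: for every tree T of cardinality κ⁺, if every subtree T' ⊆ T of cardinality less than κ is ρ-special, then T is ρ-special. -/

import Mathlib

open Cardinal

/-- A filter `F` is `κ`-complete if it is closed under intersections of fewer than `κ`
of its members. -/
def IsKappaComplete (κ : Cardinal.{u}) {β : Type u} (F : Filter β) : Prop :=
  ∀ S : Set (Set β), #S < κ → S ⊆ F.sets → ⋂₀ S ∈ F

/-- `κ` has the `lam`-filter extension property if every `κ`-complete (proper) filter on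
a set of size `lam` extends to a `κ`-complete ultrafilter. -/
def HasFilterExt (κ lam : Cardinal.{u}) : Prop :=
  ∀ (β : Type u), #β = lam → ∀ F : Filter β, F.NeBot → IsKappaComplete κ F →
    ∃ U : Ultrafilter β, (U : Filter β) ≤ F ∧ IsKappaComplete κ (U : Filter β)

/-- A partially ordered set is `ρ`-special if it is the union of at most `ρ` many
antichains (sets of pairwise incomparable elements). -/
def IsSpecialTree (T : Type u) [Preorder T] (ρ : Cardinal.{u}) : Prop :=
  ∃ (ι : Type u) (_ : #ι ≤ ρ) (f : ι → Set T),
    (∀ i, IsAntichain (· ≤ ·) (f i)) ∧ ⋃ i, f i = Set.univ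

/-- A cardinal with the filter extension property is a strong limit. -/
lemma strongLimit_of_filterExt (κ : Cardinal.{u}) (hreg : κ.IsRegular)
    (hcompact : HasFilterExt κ κ) (μ : Cardinal.{u}) (hμ : μ < κ) : (2 : Cardinal.{u}) ^ μ < κ := by
  classical
  by_contra! hcon
  have hK : #κ.out = κ := Cardinal.mk_out κ
  have hne : (Filter.cocardinal κ.out hreg).NeBot := by
    rw [Filter.neBot_iff]
    intro hbot
    have : (∅ : Set κ.out) ∈ Filter.cocardinal κ.out hreg := by rw [hbot]; trivial
    rw [Filter.mem_cocardinal] at this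
    simp at this
  obtain ⟨U, hU, hUc⟩ := hcompact κ.out hK (Filter.cocardinal κ.out hreg) hne
    (fun S hS hSs => (cardinal_sInter_mem (l := Filter.cocardinal κ.out hreg) hS).2 hSs)
  have hle : #κ.out ≤ #(Set μ.out) := by
    rw [hK, Cardinal.mk_set, Cardinal.mk_out]; exact hcon
  obtain ⟨e⟩ := hle
  let D : μ.out → Set κ.out := fun l =>
    if {k | l ∈ e k} ∈ U then {k | l ∈ e k} else {k | l ∈ e k}ᶜ
  have hD : ∀ l, D l ∈ U := by
    intro l
    by_cases h : {k | l ∈ e k} ∈ U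
    · simp only [D, if_pos h]; exact h
    · simp only [D, if_neg h]; exact Ultrafilter.compl_mem_iff_notMem.2 h
  have h1 : ⋂₀ Set.range D ∈ (U : Filter κ.out) := by
    apply hUc
    · refine lt_of_le_of_lt Cardinal.mk_range_le ?_
      rwa [Cardinal.mk_out]
    · rintro _ ⟨l, rfl⟩
      exact hD l
  have hsub : (⋂₀ Set.range D).Subsingleton := by
    intro x hx y hy
    apply e.injective
    ext l
    have hx' : x ∈ D l := hx _ ⟨l, rfl⟩
    have hy' : y ∈ D l := hy _ ⟨l, rfl⟩
    by_cases h : {k | l ∈ e k} ∈ U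
    · simp only [D, if_pos h] at hx' hy'
      exact ⟨fun _ => hy', fun _ => hx'⟩
    · simp only [D, if_neg h] at hx' hy'
      exact ⟨fun h => absurd h hx', fun h => absurd h hy'⟩
  have h2 : (⋂₀ Set.range D)ᶜ ∈ (U : Filter κ.out) := by
    apply hU
    rw [Filter.mem_cocardinal, compl_compl]
    refine lt_of_le_of_lt ?_ (hreg.nat_lt 1)
    rw [Nat.cast_one]
    exact Cardinal.mk_le_one_iff_set_subsingleton.2 hsub
  exact (Ultrafilter.compl_mem_iff_notMem.1 h2) h1

/-- Hausdorff-style independent family of `R`-valued functions. -/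
lemma exists_independent (κ : Cardinal.{u}) (hreg : κ.IsRegular)
    (hlim : ∀ μ < κ, (2 : Cardinal.{u}) ^ μ < κ) (R : Type u) [Nonempty R] (hR : #R < κ)
    (T : Type u) (hT : #T ≤ 2 ^ κ) :
    ∃ (β : Type u) (_ : #β = κ) (f : T → β → R),
      ∀ (A : Set T), #A < κ → ∀ g : T → R, ∃ b, ∀ t ∈ A, f t b = g t := by
  classical
  let K := κ.ord.ToType
  have hK : #K = κ := Cardinal.mk_ord_toType κ
  have hIio : ∀ a : K, #(Set.Iio a) < κ := fun a => Cardinal.mk_Iio_toType_ord_lt a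
  have hIic : ∀ a : K, #(Set.Iic a) < κ := fun a => by
    rw [← Set.Iio_insert]
    exact lt_of_le_of_lt Cardinal.mk_insert_le
      (Cardinal.add_lt_of_lt hreg.aleph0_le (hIio a) (by simpa using hreg.nat_lt 1))
  have hle : #T ≤ #(Set K) := by rwa [Cardinal.mk_set, hK]
  obtain ⟨X⟩ := hle
  let β := Σ a : K, (Set (Set.Iio a) → R)
  refine ⟨β, ?_, fun t b => b.2 {x | x.1 ∈ X t}, ?_⟩
  · apply le_antisymm
    · rw [Cardinal.mk_sigma]
      refine (Cardinal.sum_le_sum _ (fun _ => κ) fun a => ?_).trans ?_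
      · rw [← Cardinal.power_def, Cardinal.mk_set]
        refine le_of_lt (lt_of_le_of_lt
          (Cardinal.power_le_power_right (Cardinal.cantor #R).le) ?_)
        rw [← Cardinal.power_mul]
        exact hlim _ (Cardinal.mul_lt_of_lt hreg.aleph0_le hR (hlim _ (hIio a)))
      · rw [Cardinal.sum_const', hK, Cardinal.mul_eq_self hreg.aleph0_le]
    · calc κ = #K := hK.symm
        _ ≤ #β := Cardinal.mk_le_of_injective (f := fun a : K =>
            (⟨a, fun _ => Classical.arbitrary R⟩ : β)) (fun a b h => (Sigma.mk.inj h).1)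
  · intro A hA g
    have hsep : ∀ p : A × A, ∃ a : K, p.1 ≠ p.2 → ¬ (a ∈ X p.1 ↔ a ∈ X p.2) := by
      intro p
      by_contra! hc
      have hne : Nonempty K := by
        rw [← Cardinal.mk_ne_zero_iff, hK]; exact hreg.ne_zero
      apply (hc (Classical.arbitrary K)).1
      apply Subtype.ext
      apply X.injective
      ext a
      exact (hc a).2
    choose s hs using hsep
    have hAA : #(A × A) < κ := by
      rw [Cardinal.mk_prod, Cardinal.lift_id]
      exact Cardinal.mul_lt_of_lt hreg.aleph0_le hA hA
    have hU : #(⋃ p, Set.Iic (s p) : Set K) < κ :=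
      (Cardinal.card_iUnion_lt_iff_forall_of_isRegular hreg hAA).2 fun p => hIic _
    have : ∃ a : K, a ∉ ⋃ p, Set.Iic (s p) := by
      by_contra! hc
      rw [Set.eq_univ_of_forall hc, Cardinal.mk_univ, hK] at hU
      exact lt_irrefl _ hU
    obtain ⟨a, ha⟩ := this
    simp only [Set.mem_iUnion, Set.mem_Iic, not_exists, not_le] at ha
    let Y : A → Set (Set.Iio a) := fun t => {x | x.1 ∈ X t}
    have hY : Function.Injective Y := by
      intro t t' h
      by_contra hne
      apply hs (t, t') hne
      have := Set.ext_iff.1 h ⟨s (t, t'), ha _⟩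
      exact this
    refine ⟨⟨a, fun y => if h : ∃ t, Y t = y then g h.choose else Classical.arbitrary R⟩, ?_⟩
    intro t ht
    have hex : ∃ t', Y t' = Y ⟨t, ht⟩ := ⟨_, rfl⟩
    have : hex.choose = ⟨t, ht⟩ := hY hex.choose_spec
    change (if h : ∃ t', Y t' = Y ⟨t, ht⟩ then g h.choose else Classical.arbitrary R) = g t
    rw [dif_pos hex, this]

/-- A special tree has a good colouring by `ρ.out`. -/
lemma IsSpecialTree.exists_coloring {T : Type u} [PartialOrder T] {ρ : Cardinal.{u}}
    (h : IsSpecialTree T ρ) : ∃ g : T → ρ.out, ∀ x y, x < y → g x ≠ g y := by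
  obtain ⟨ι, hι, f, hf, hU⟩ := h
  have hle : #ι ≤ #ρ.out := by rwa [Cardinal.mk_out]
  obtain ⟨e⟩ := hle
  have : ∀ x, ∃ i, x ∈ f i := fun x => by
    have : x ∈ ⋃ i, f i := by rw [hU]; trivial
    simpa using this
  choose c hc using this
  refine ⟨fun x => e (c x), fun x y hxy heq => ?_⟩
  have heq' := e.injective heq
  exact hf (c x) (hc x) (heq' ▸ hc y) hxy.ne hxy.le

/-- **RC(ρ, <κ, κ⁺).**  Let `κ` be a regular uncountable cardinal which is `κ`-compact,
i.e. has the `κ`-filter extension property, and let `ρ < κ` be a cardinal.  If `T` is a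
tree (a partial order in which the predecessors of every element are well-ordered) of
cardinality `κ⁺` such that every subtree of cardinality less than `κ` is `ρ`-special,
then `T` is `ρ`-special. -/
theorem statement14 (κ : Cardinal.{u})
    (hreg : κ.IsRegular) (hunc : ℵ₀ < κ)
    (hcompact : HasFilterExt κ κ)
    (ρ : Cardinal.{u}) (hρ : ρ < κ)
    (T : Type u) [PartialOrder T]
    (htree : ∀ t : T, IsWellOrder {s : T // s < t} (· < ·))
    (hcard : #T = Order.succ κ)
    (hsub : ∀ T' : Set T, #T' < κ → IsSpecialTree (↥T') ρ) :
    IsSpecialTree T ρ := by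
  classical
  have hlim := strongLimit_of_filterExt κ hreg hcompact
  have hTne : Nonempty T := by
    rw [← Cardinal.mk_ne_zero_iff, hcard]
    exact (Order.bot_lt_succ κ).ne'
  obtain ⟨t0⟩ := hTne
  have hRne : Nonempty ρ.out := by
    obtain ⟨g, _⟩ := (hsub {t0} (by simpa using hreg.nat_lt 1)).exists_coloring
    exact ⟨g ⟨t0, rfl⟩⟩
  have hR : #ρ.out < κ := by rwa [Cardinal.mk_out]
  obtain ⟨β, hβ, f, hf⟩ := exists_independent κ hreg hlim ρ.out hR T
    (by rw [hcard]; exact Order.succ_le_of_lt (Cardinal.cantor κ))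
  let G : Set T → Set β := fun A => {b | ∀ x ∈ A, ∀ y ∈ A, x < y → f x b ≠ f y b}
  have hGmono : ∀ A B : Set T, A ⊆ B → G B ⊆ G A :=
    fun A B hAB b hb x hx y hy => hb x (hAB hx) y (hAB hy)
  have hGne : ∀ A : Set T, #A < κ → (G A).Nonempty := by
    intro A hA
    obtain ⟨g, hg⟩ := (hsub A hA).exists_coloring
    obtain ⟨b, hb⟩ := hf A hA
      (fun t => if h : t ∈ A then g ⟨t, h⟩ else Classical.arbitrary _)
    refine ⟨b, fun x hx y hy hxy => ?_⟩
    rw [hb x hx, hb y hy, dif_pos hx, dif_pos hy]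
    exact hg ⟨x, hx⟩ ⟨y, hy⟩ hxy
  let F : Filter β :=
    { sets := {s | ∃ A : Set T, #A < κ ∧ G A ⊆ s}
      univ_sets := ⟨∅, by simpa using hreg.pos, Set.subset_univ _⟩
      sets_of_superset := fun ⟨A, hA, hs⟩ hst => ⟨A, hA, hs.trans hst⟩
      inter_sets := fun ⟨A, hA, hs⟩ ⟨B, hB, ht⟩ =>
        ⟨A ∪ B, (Cardinal.mk_union_le A B).trans_lt
          (Cardinal.add_lt_of_lt hreg.aleph0_le hA hB),
          Set.subset_inter ((hGmono _ _ Set.subset_union_left).trans hs)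
            ((hGmono _ _ Set.subset_union_right).trans ht)⟩ }
  have hFmem : ∀ s, s ∈ F ↔ ∃ A : Set T, #A < κ ∧ G A ⊆ s := fun s => Iff.rfl
  have hFne : F.NeBot := by
    rw [Filter.neBot_iff]
    intro hbot
    have : (∅ : Set β) ∈ F := by rw [hbot]; trivial
    obtain ⟨A, hA, hs⟩ := (hFmem _).1 this
    obtain ⟨b, hb⟩ := hGne A hA
    exact hs hb
  have hFc : IsKappaComplete κ F := by
    intro S hS hSF
    have : ∀ s : S, ∃ A : Set T, #A < κ ∧ G A ⊆ s.1 := fun s => (hFmem _).1 (hSF s.2)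
    choose A hA hAs using this
    refine (hFmem _).2 ⟨⋃ s, A s,
      (Cardinal.card_iUnion_lt_iff_forall_of_isRegular hreg hS).2 hA, ?_⟩
    refine Set.subset_sInter fun s hs => ?_
    exact (hGmono _ _ (Set.subset_iUnion A ⟨s, hs⟩)).trans (hAs ⟨s, hs⟩)
  obtain ⟨U, hUF, hUc⟩ := hcompact β hβ F hFne hFc
  have hcol : ∀ t, ∃ i : ρ.out, {b | f t b = i} ∈ U := by
    intro t
    by_contra! hc
    have h1 : ⋂₀ Set.range (fun i : ρ.out => {b | f t b = i}ᶜ) ∈ (U : Filter β) := by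
      apply hUc
      · exact lt_of_le_of_lt Cardinal.mk_range_le hR
      · rintro _ ⟨i, rfl⟩
        exact Ultrafilter.compl_mem_iff_notMem.2 (hc i)
    obtain ⟨b, hb⟩ := U.nonempty_of_mem h1
    exact hb _ ⟨f t b, rfl⟩ rfl
  choose c hc using hcol
  refine ⟨ρ.out, (Cardinal.mk_out ρ).le, fun i => {t | c t = i}, ?_, ?_⟩
  · intro i x hx y hy hne hle
    have hlt : x < y := lt_of_le_of_ne hle hne
    have h3 : G {x, y} ∈ U := by
      apply hUF
      refine (hFmem _).2 ⟨{x, y}, ?_, subset_rfl⟩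
      exact lt_of_lt_of_le (Set.toFinite {x, y}).lt_aleph0 hreg.aleph0_le
    obtain ⟨b, ⟨hb1, hb2⟩, hb3⟩ :=
      U.nonempty_of_mem (Filter.inter_mem (Filter.inter_mem (hc x) (hc y)) h3)
    apply hb3 x (by simp) y (by simp) hlt
    have e1 : f x b = c x := hb1
    have e2 : f y b = c y := hb2
    have e3 : c x = i := hx
    have e4 : c y = i := hy
    rw [e1, e2, e3, e4]
  · ext t; simp
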